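/- arXiv:2203.06095 — 2 statements merged into one kernel-verified Lean document; each statement's English description precedes it below -/
import Mathlib

section
/- Let n ≥ 1 and let z, w : Fin n → {0,1} be two n-bit strings. Let A_{z,w} be the 2^n × 2^n matrix of |z⟩⟨w| + |w⟩⟨z| (entries [a = z ∧ b = w] + [a = w ∧ b = z]) and let B_{z,w} be the matrix of i(|z⟩⟨w| − |w⟩⟨z|) (entries i([a = z ∧ b = w] − [a = w ∧ b = z])). Then: (a) any two Pauli strings with nonvanishing coefficient in B_{z,w} commute, i.e. if trace(P_s · B_{z,w}) ≠ 0 and trace(P_{s'} · B_{z,w}) ≠ 0 then P_s · P_{s'} = P_{s'} · P_s; and (b) if z ≠ w, then any Pauli string with nonvanishing coefficient in A_{z,w} fails to commute with any Pauli string with nonvanishing coefficient in B_{z,w}, i.e. if trace(P_s · A_{z,w}) ≠ 0 and trace(P_{s'} · B_{z,w}) ≠ 0 then P_s · P_{s'} ≠ P_{s'} · P_s. -/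
open Matrix

/-- The four single-qubit Pauli matrices `I, X, Y, Z`. -/
noncomputable def pauli : Fin 4 → Matrix (Fin 2) (Fin 2) ℂ :=
  ![!![1, 0; 0, 1], !![0, 1; 1, 0], !![0, -Complex.I; Complex.I, 0], !![1, 0; 0, -1]]

/-- The Pauli string `σ_{s 0} ⊗ ⋯ ⊗ σ_{s (n-1)}` as a `2^n × 2^n` matrix indexed by
bitstrings. -/
noncomputable def pauliString (n : ℕ) (s : Fin n → Fin 4) :
    Matrix (Fin n → Fin 2) (Fin n → Fin 2) ℂ :=
  Matrix.of fun a b => ∏ i, pauli (s i) (a i) (b i)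

/-- The matrix `|z⟩⟨w| + |w⟩⟨z|`. -/
def ketbraSym {n : ℕ} (z w : Fin n → Fin 2) :
    Matrix (Fin n → Fin 2) (Fin n → Fin 2) ℂ :=
  Matrix.of fun a b =>
    (if a = z ∧ b = w then 1 else 0) + (if a = w ∧ b = z then 1 else 0)

/-- The matrix `i (|z⟩⟨w| - |w⟩⟨z|)`. -/
noncomputable def ketbraAnti {n : ℕ} (z w : Fin n → Fin 2) :
    Matrix (Fin n → Fin 2) (Fin n → Fin 2) ℂ :=
  Matrix.of fun a b =>
    Complex.I * ((if a = z ∧ b = w then 1 else 0) - (if a = w ∧ b = z then 1 else 0))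

/-- Transposition sign of a Pauli matrix. -/
noncomputable def pauliSign : Fin 4 → ℂ := ![1, 1, -1, 1]

theorem pauli_swap (s : Fin 4) (a b : Fin 2) : pauli s b a = pauliSign s * pauli s a b := by
  fin_cases s <;> fin_cases a <;> fin_cases b <;> simp [pauli, pauliSign]

theorem pauli_site_comm (s t : Fin 4) (a b : Fin 2) (hs : pauli s a b ≠ 0)
    (ht : pauli t a b ≠ 0) (c d : Fin 2) :
    ∑ e, pauli s c e * pauli t e d
      = (pauliSign s * pauliSign t) * ∑ e, pauli t c e * pauli s e d := by
  revert hs ht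
  fin_cases s <;> fin_cases t <;> fin_cases a <;> fin_cases b <;>
    simp [pauli, pauliSign] <;>
    fin_cases c <;> fin_cases d <;> simp

theorem pauli_site_ne (s t : Fin 4) (a b : Fin 2) (hs : pauli s a b ≠ 0)
    (ht : pauli t a b ≠ 0) : ∑ e, pauli t a e * pauli s e a ≠ 0 := by
  revert hs ht
  fin_cases s <;> fin_cases t <;> fin_cases a <;> fin_cases b <;>
    simp [pauli]

theorem pauliString_mul_apply (n : ℕ) (s t : Fin n → Fin 4) (a b : Fin n → Fin 2) :
    (pauliString n s * pauliString n t) a b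
      = ∏ i, ∑ e, pauli (s i) (a i) e * pauli (t i) e (b i) := by
  rw [Finset.prod_univ_sum, Fintype.piFinset_univ, Matrix.mul_apply]
  simp [pauliString, Finset.prod_mul_distrib]

theorem pauliString_swap (n : ℕ) (s : Fin n → Fin 4) (a b : Fin n → Fin 2) :
    pauliString n s b a = (∏ i, pauliSign (s i)) * pauliString n s a b := by
  simp only [pauliString, Matrix.of_apply, ← Finset.prod_mul_distrib]
  exact Finset.prod_congr rfl fun i _ => pauli_swap _ _ _

theorem pauliSign_prod (n : ℕ) (s : Fin n → Fin 4) :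
    (∏ i, pauliSign (s i)) = 1 ∨ (∏ i, pauliSign (s i)) = -1 := by
  refine Finset.prod_induction _ (fun x : ℂ => x = 1 ∨ x = -1) ?_ (Or.inl rfl) ?_
  · rintro a b (rfl | rfl) (rfl | rfl) <;> simp
  · intro i _
    generalize s i = k
    fin_cases k <;> simp [pauliSign]

theorem trace_mul_ite {n : ℕ} (M : Matrix (Fin n → Fin 2) (Fin n → Fin 2) ℂ)
    (z w : Fin n → Fin 2) :
    ∑ a, ∑ b, M a b * (if b = z ∧ a = w then 1 else 0) = M w z := by
  rw [Finset.sum_eq_single w, Finset.sum_eq_single z] <;> simp +contextual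

theorem trace_anti {n : ℕ} (M : Matrix (Fin n → Fin 2) (Fin n → Fin 2) ℂ)
    (z w : Fin n → Fin 2) :
    (M * ketbraAnti z w).trace = Complex.I * (M w z - M z w) := by
  rw [← trace_mul_ite M z w, ← trace_mul_ite M w z]
  simp only [Matrix.trace, Matrix.diag, Matrix.mul_apply, ketbraAnti, Matrix.of_apply,
    ← Finset.sum_sub_distrib, Finset.mul_sum]
  exact Finset.sum_congr rfl fun a _ => Finset.sum_congr rfl fun b _ => by ring

theorem trace_sym {n : ℕ} (M : Matrix (Fin n → Fin 2) (Fin n → Fin 2) ℂ)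
    (z w : Fin n → Fin 2) :
    (M * ketbraSym z w).trace = M w z + M z w := by
  rw [← trace_mul_ite M z w, ← trace_mul_ite M w z]
  simp only [Matrix.trace, Matrix.diag, Matrix.mul_apply, ketbraSym, Matrix.of_apply,
    ← Finset.sum_add_distrib]
  exact Finset.sum_congr rfl fun a _ => Finset.sum_congr rfl fun b _ => by ring

theorem anti_ne {n : ℕ} (s : Fin n → Fin 4) (z w : Fin n → Fin 2)
    (h : (pauliString n s * ketbraAnti z w).trace ≠ 0) :
    (∏ i, pauliSign (s i)) = -1 ∧ ∀ i, pauli (s i) (z i) (w i) ≠ 0 := by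
  rw [trace_anti, pauliString_swap n s z w] at h
  have h0 : pauliString n s z w ≠ 0 := fun h0 => h (by simp [h0])
  refine ⟨(pauliSign_prod n s).resolve_left fun h1 => h (by simp [h1]), fun i => ?_⟩
  rw [pauliString, Matrix.of_apply] at h0
  exact Finset.prod_ne_zero_iff.mp h0 i (Finset.mem_univ i)

theorem sym_ne {n : ℕ} (s : Fin n → Fin 4) (z w : Fin n → Fin 2)
    (h : (pauliString n s * ketbraSym z w).trace ≠ 0) :
    (∏ i, pauliSign (s i)) = 1 ∧ ∀ i, pauli (s i) (z i) (w i) ≠ 0 := by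
  rw [trace_sym, pauliString_swap n s z w] at h
  have h0 : pauliString n s z w ≠ 0 := fun h0 => h (by simp [h0])
  refine ⟨(pauliSign_prod n s).resolve_right fun h1 => h (by simp [h1]), fun i => ?_⟩
  rw [pauliString, Matrix.of_apply] at h0
  exact Finset.prod_ne_zero_iff.mp h0 i (Finset.mem_univ i)

theorem pauliString_comm_sign {n : ℕ} (s t : Fin n → Fin 4) (z w : Fin n → Fin 2)
    (hs : ∀ i, pauli (s i) (z i) (w i) ≠ 0) (ht : ∀ i, pauli (t i) (z i) (w i) ≠ 0)
    (a b : Fin n → Fin 2) :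
    (pauliString n s * pauliString n t) a b
      = ((∏ i, pauliSign (s i)) * ∏ i, pauliSign (t i)) *
        (pauliString n t * pauliString n s) a b := by
  simp only [pauliString_mul_apply, ← Finset.prod_mul_distrib]
  exact Finset.prod_congr rfl fun i _ => pauli_site_comm _ _ _ _ (hs i) (ht i) _ _

/-- (a) any two Pauli strings with nonvanishing coefficient in
`i(|z⟩⟨w| - |w⟩⟨z|)` commute; (b) if `z ≠ w`, then any Pauli string with nonvanishing
coefficient in `|z⟩⟨w| + |w⟩⟨z|` fails to commute with any Pauli string with
nonvanishing coefficient in `i(|z⟩⟨w| - |w⟩⟨z|)`. -/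
theorem pauli_strings_ketbra_commutation (n : ℕ) (hn : 1 ≤ n)
    (z w : Fin n → Fin 2) :
    (∀ s s' : Fin n → Fin 4,
      (pauliString n s * ketbraAnti z w).trace ≠ 0 →
      (pauliString n s' * ketbraAnti z w).trace ≠ 0 →
      pauliString n s * pauliString n s' = pauliString n s' * pauliString n s) ∧
    (z ≠ w → ∀ s s' : Fin n → Fin 4,
      (pauliString n s * ketbraSym z w).trace ≠ 0 →
      (pauliString n s' * ketbraAnti z w).trace ≠ 0 →
      pauliString n s * pauliString n s' ≠ pauliString n s' * pauliString n s) := by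
  refine ⟨fun s s' h h' => ?_, fun _ s s' h h' hc => ?_⟩
  · obtain ⟨e, hs⟩ := anti_ne s z w h
    obtain ⟨e', hs'⟩ := anti_ne s' z w h'
    ext a b
    rw [pauliString_comm_sign s s' z w hs hs', e, e']
    ring
  · obtain ⟨e, hs⟩ := sym_ne s z w h
    obtain ⟨e', hs'⟩ := anti_ne s' z w h'
    have key := pauliString_comm_sign s s' z w hs hs' z z
    rw [hc, e, e'] at key
    have h0 : (pauliString n s' * pauliString n s) z z = 0 := by linear_combination key / 2
    rw [pauliString_mul_apply] at h0
    exact Finset.prod_ne_zero_iff.mpr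
      (fun i _ => pauli_site_ne _ _ _ _ (hs i) (hs' i)) h0
end

section
/- Let n ≥ 1 and, for d ∈ ℕ, let A_d be the real 2^n × 2^n matrix indexed by bitstrings a, b : Fin n → {0,1} whose (a,b) entry is 1 if the Hamming distance between a and b equals d, and 0 otherwise. Then for every k ≥ 1 there exist real coefficients c_0, c_1, …, c_{k−1} such that A_1^k = Σ_{j=0}^{k−1} c_j·A_j + k!·A_k. In particular, for k ≤ n the k-th power of the Hamming-distance-one matrix has nonzero entries at all pairs of bitstrings at Hamming distance k. -/
open Matrix

/-- `hamMat n d` is the `2^n × 2^n` real matrix whose `(a,b)` entry is `1` if the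
Hamming distance between the bitstrings `a` and `b` equals `d`, and `0` otherwise
(the matrix `T_{Ham(d)} = A_d`). -/
def hamMat (n d : ℕ) : Matrix (Fin n → Fin 2) (Fin n → Fin 2) ℝ :=
  Matrix.of fun a b => if hammingDist a b = d then 1 else 0

/-- Flip the `i`-th bit. -/
def flipBit {n : ℕ} (a : Fin n → Fin 2) (i : Fin n) : Fin n → Fin 2 :=
  Function.update a i (1 - a i)

/-- The entry of the `k`-th power at Hamming distance `d`. -/
def powCoeff (n : ℕ) : ℕ → ℕ → ℝ
  | 0, d => if d = 0 then 1 else 0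
  | k + 1, d => d * powCoeff n k (d - 1) + ((n : ℝ) - d) * powCoeff n k (d + 1)

lemma fin2_aux (x y : Fin 2) : (1 - x = y) ↔ x ≠ y := by
  revert x y; decide

lemma eq_flipBit_iff {n : ℕ} (a c : Fin n → Fin 2) (i : Fin n) :
    c = flipBit a i ↔ Finset.univ.filter (fun j => a j ≠ c j) = {i} := by
  simp only [funext_iff, Finset.ext_iff, Finset.mem_filter, Finset.mem_univ, true_and,
    Finset.mem_singleton, flipBit]
  refine forall_congr' fun j => ?_
  by_cases h : j = i
  · subst h
    have := fin2_aux (a j) (c j)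
    simp only [Function.update_self, iff_true]
    rw [eq_comm, this]
  · simp [Function.update_of_ne h, h, eq_comm]

lemma hamMat_one_apply {n : ℕ} (a c : Fin n → Fin 2) :
    hamMat n 1 a c = ∑ i, if c = flipBit a i then (1 : ℝ) else 0 := by
  simp only [eq_flipBit_iff, hamMat, Matrix.of_apply, hammingDist]
  split_ifs with h
  · obtain ⟨i, hi⟩ := Finset.card_eq_one.1 h
    rw [hi]
    simp
  · symm
    apply Finset.sum_eq_zero
    intro i _
    rw [if_neg]
    intro hi
    exact h (by rw [hi]; simp)

lemma dist_flip_ne {n : ℕ} (a b : Fin n → Fin 2) (i : Fin n) (h : a i ≠ b i) :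
    hammingDist (flipBit a i) b = hammingDist a b - 1 := by
  unfold hammingDist
  rw [← Finset.card_erase_of_mem (a := i) (by simp [h])]
  congr 1
  ext j
  simp only [Finset.mem_erase, Finset.mem_insert, Finset.mem_filter, Finset.mem_univ, true_and]
  by_cases hj : j = i
  · subst hj
    simp [flipBit, (fin2_aux _ _).2 h]
  · simp [flipBit, hj]

lemma dist_flip_eq {n : ℕ} (a b : Fin n → Fin 2) (i : Fin n) (h : a i = b i) :
    hammingDist (flipBit a i) b = hammingDist a b + 1 := by
  unfold hammingDist
  rw [← Finset.card_insert_of_notMem (a := i) (by simp [h])]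
  congr 1
  ext j
  simp only [Finset.mem_erase, Finset.mem_insert, Finset.mem_filter, Finset.mem_univ, true_and]
  by_cases hj : j = i
  · subst hj
    have : ¬ (1 - a j = b j) := fun h' => (fin2_aux _ _).1 h' h
    simp [flipBit, this]
  · simp [flipBit, hj]

lemma pow_apply_eq (n k : ℕ) (a b : Fin n → Fin 2) :
    (hamMat n 1 ^ k) a b = powCoeff n k (hammingDist a b) := by
  induction k generalizing a b with
  | zero => simp [powCoeff, Matrix.one_apply]
  | succ k ih =>
    rw [pow_succ', Matrix.mul_apply]
    simp only [hamMat_one_apply, ih, Finset.sum_mul]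
    rw [Finset.sum_comm]
    simp only [ite_mul, one_mul, zero_mul, Finset.sum_ite_eq', Finset.mem_univ, if_true]
    rw [← Finset.sum_filter_add_sum_filter_not Finset.univ (fun i => a i ≠ b i)]
    have hc := Finset.card_filter_add_card_filter_not (s := (Finset.univ : Finset (Fin n)))
      (fun i => a i ≠ b i)
    rw [Finset.card_univ, Fintype.card_fin] at hc
    have h1 : ∀ i ∈ Finset.univ.filter (fun i => a i ≠ b i),
        powCoeff n k (hammingDist (flipBit a i) b) = powCoeff n k (hammingDist a b - 1) := by
      intro i hi
      rw [dist_flip_ne a b i (by simpa using hi)]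
    have h2 : ∀ i ∈ Finset.univ.filter (fun i => ¬ (a i ≠ b i)),
        powCoeff n k (hammingDist (flipBit a i) b) = powCoeff n k (hammingDist a b + 1) := by
      intro i hi
      rw [dist_flip_eq a b i (by simpa using hi)]
    rw [Finset.sum_congr rfl h1, Finset.sum_congr rfl h2, Finset.sum_const, Finset.sum_const,
      nsmul_eq_mul, nsmul_eq_mul, powCoeff]
    have hd : (Finset.univ.filter (fun i => a i ≠ b i)).card = hammingDist a b := rfl
    rw [hd] at hc ⊢
    have hc' : ((Finset.univ.filter (fun i => ¬ (a i ≠ b i))).card : ℝ)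
        = (n : ℝ) - hammingDist a b := by
      rw [eq_sub_iff_add_eq']
      exact_mod_cast hc
    rw [hc']

lemma powCoeff_zero_of_lt (n k d : ℕ) (h : k < d) : powCoeff n k d = 0 := by
  induction k generalizing d with
  | zero => simp [powCoeff]; omega
  | succ k ih => rw [powCoeff, ih _ (by omega), ih _ (by omega)]; simp

lemma powCoeff_self (n k : ℕ) : powCoeff n k k = (Nat.factorial k : ℕ) := by
  induction k with
  | zero => simp [powCoeff]
  | succ k ih =>
    rw [powCoeff, powCoeff_zero_of_lt n k (k + 1 + 1) (by omega), Nat.add_sub_cancel, ih,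
      Nat.factorial_succ]
    push_cast
    ring

/-- For every `k ≥ 1` there exist real coefficients `c_0, …, c_{k-1}` with
`A_1 ^ k = Σ_{j<k} c_j • A_j + k! • A_k`; in particular, for `k ≤ n` the `k`-th power of
the Hamming distance one matrix is nonzero at every pair of bitstrings at Hamming
distance `k`. -/
theorem hamming_one_pow (n : ℕ) (hn : 1 ≤ n) (k : ℕ) (hk : 1 ≤ k) :
    (∃ c : ℕ → ℝ, hamMat n 1 ^ k =
        (∑ j ∈ Finset.range k, c j • hamMat n j) + ((Nat.factorial k : ℕ) : ℝ) • hamMat n k) ∧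
    (k ≤ n → ∀ a b : Fin n → Fin 2, hammingDist a b = k → (hamMat n 1 ^ k) a b ≠ 0) := by
  constructor
  · refine ⟨powCoeff n k, ?_⟩
    rw [← powCoeff_self n k, ← Finset.sum_range_succ (fun j => powCoeff n k j • hamMat n j)]
    ext a b
    rw [pow_apply_eq, Matrix.sum_apply]
    simp only [Matrix.smul_apply, hamMat, Matrix.of_apply, smul_eq_mul, mul_ite, mul_one,
      mul_zero, Finset.sum_ite_eq, Finset.mem_range]
    split_ifs with h
    · rfl
    · exact powCoeff_zero_of_lt n k _ (by omega)
  · intro _ a b hab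
    rw [pow_apply_eq, hab, powCoeff_self]
    exact_mod_cast Nat.factorial_ne_zero k
end
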